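/- arXiv:math/0702627 — 2 statements merged into one kernel-verified Lean document; each statement's English description precedes it below -/
import Mathlib

section
/- Let G be a connected irregular graph on n vertices with maximum degree Δ, diameter D, and largest adjacency eigenvalue λ₁. Then Δ − λ₁ > 1/(nD). -/
open SimpleGraph Finset Matrix

lemma cut_aux {V : Type*} [Fintype V] [DecidableEq V] (a : V → V → ℝ)
    (hsymm : ∀ i j, a i j = a j i) (y : V → ℝ) (S : Finset V) :
    ∑ i ∈ S, ∑ j, a i j * (y i - y j) = ∑ i ∈ S, ∑ j ∈ Sᶜ, a i j * (y i - y j) := by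
  have h0 : ∑ i ∈ S, ∑ j ∈ S, a i j * (y i - y j) = 0 := by
    have h1 : ∑ i ∈ S, ∑ j ∈ S, a i j * (y i - y j)
        = - ∑ i ∈ S, ∑ j ∈ S, a i j * (y i - y j) := by
      conv_lhs => rw [Finset.sum_comm]
      rw [← Finset.sum_neg_distrib]
      refine Finset.sum_congr rfl fun i _ => ?_
      rw [← Finset.sum_neg_distrib]
      refine Finset.sum_congr rfl fun j _ => ?_
      rw [hsymm j i]; ring
    linarith
  have h2 : ∀ i, ∑ j, a i j * (y i - y j)
      = ∑ j ∈ S, a i j * (y i - y j) + ∑ j ∈ Sᶜ, a i j * (y i - y j) := fun i =>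
    (Finset.sum_add_sum_compl S _).symm
  simp_rw [h2]
  rw [Finset.sum_add_distrib, h0, zero_add]

lemma walk_aux {V : Type*} {G : SimpleGraph V} (y : V → ℝ) (c : ℝ)
    (h : ∀ u v, G.Adj u v → y u - y v ≤ c) {u t : V} (p : G.Walk u t) :
    y u - y t ≤ p.length * c := by
  induction p with
  | nil => simp
  | cons hadj p ih =>
    have := h _ _ hadj
    rw [SimpleGraph.Walk.length_cons]
    push_cast
    linarith

/-- Main theorem: if `G` is a connected irregular graph on `n` vertices with maximum degree
`Δ`, diameter `D` and largest adjacency eigenvalue `μ`, then `Δ − μ > 1/(nD)`. -/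
theorem stmt3 {V : Type*} [Fintype V] [DecidableEq V]
    (G : SimpleGraph V) [DecidableRel G.Adj]
    (hconn : G.Connected)
    (hirr : ¬ ∃ d, G.IsRegularOfDegree d)
    (Δ : ℕ) (hΔ : ∀ i, G.degree i ≤ Δ) (hΔex : ∃ i, G.degree i = Δ)
    (μ : ℝ)
    (hμ : Module.End.HasEigenvalue (Matrix.toLin' (G.adjMatrix ℝ)) μ)
    (hμmax : ∀ ν : ℝ, Module.End.HasEigenvalue (Matrix.toLin' (G.adjMatrix ℝ)) ν → ν ≤ μ) :
    (Δ : ℝ) - μ > 1 / (Fintype.card V * G.diam) := by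
  classical
  haveI : Nonempty V := hconn.nonempty
  -- a deficient vertex
  obtain ⟨t, ht⟩ : ∃ t, G.degree t < Δ := by
    by_contra hcon
    push Not at hcon
    exact hirr ⟨Δ, fun v => le_antisymm (hΔ v) (hcon v)⟩
  have hntop : G ≠ ⊤ := by
    intro h
    subst h
    exact hirr ⟨Fintype.card V - 1, fun v => by
      convert SimpleGraph.complete_graph_degree v⟩
  haveI : Nontrivial V := by
    obtain ⟨i, hi⟩ := hΔex
    exact ⟨i, t, fun h => by subst h; omega⟩
  have hfin : G.ediam ≠ ⊤ := SimpleGraph.connected_iff_ediam_ne_top.mp hconn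
  have hD2 : 2 ≤ G.diam := by
    have h0 : G.diam ≠ 0 := by
      intro h
      rcases SimpleGraph.diam_eq_zero.mp h with h | h
      · exact hfin h
      · exact not_subsingleton V h
    have h1 : G.diam ≠ 1 := fun h => hntop (SimpleGraph.diam_eq_one.mp h)
    omega
  -- eigenvector
  obtain ⟨x, hx⟩ := hμ.exists_hasEigenvector
  have hxne : x ≠ 0 := hx.2
  have hxe : ∀ i, ∑ j, G.adjMatrix ℝ i j * x j = μ * x i := by
    intro i
    have := congrFun hx.apply_eq_smul i
    simpa [Matrix.toLin'_apply, Matrix.mulVec, dotProduct] using this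
  obtain ⟨s, hs⟩ := Finite.exists_max (fun i => |x i|)
  have hspos : 0 < |x s| := by
    obtain ⟨i, hi⟩ := Function.ne_iff.mp hxne
    exact lt_of_lt_of_le (abs_pos.mpr hi) (hs i)
  set a : V → V → ℝ := fun i j => G.adjMatrix ℝ i j with ha
  have hsymm : ∀ i j, a i j = a j i := by
    intro i j; simp [ha, SimpleGraph.adjMatrix_apply, SimpleGraph.adj_comm]
  have ha0 : ∀ i j, 0 ≤ a i j := by
    intro i j; simp only [ha, SimpleGraph.adjMatrix_apply]; split_ifs <;> norm_num
  have ha1 : ∀ i j, G.Adj i j → a i j = 1 := by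
    intro i j h; simp [ha, SimpleGraph.adjMatrix_apply, h]
  have hdeg : ∀ i, ∑ j, a i j = G.degree i := by
    intro i
    simp [ha, SimpleGraph.adjMatrix_apply, SimpleGraph.degree, SimpleGraph.neighborFinset_eq_filter]
  obtain ⟨y, hy⟩ : ∃ y : V → ℝ, y = fun i => |x i| / |x s| := ⟨_, rfl⟩
  have hy0 : ∀ i, 0 ≤ y i := by intro i; rw [hy]; positivity
  have hy1 : ∀ i, y i ≤ 1 := by
    intro i; rw [hy]; exact (div_le_one hspos).mpr (hs i)
  have hys : y s = 1 := by rw [hy]; exact div_self hspos.ne'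
  have hysub : ∀ i, μ * y i ≤ ∑ j, a i j * y j := by
    intro i
    have h1 : μ * |x i| ≤ ∑ j, a i j * |x j| := by
      calc μ * |x i| ≤ |μ * x i| := by
            rw [abs_mul]; exact mul_le_mul_of_nonneg_right (le_abs_self _) (abs_nonneg _)
        _ = |∑ j, a i j * x j| := by rw [← hxe i]
        _ ≤ ∑ j, |a i j * x j| := Finset.abs_sum_le_sum_abs _ _
        _ = ∑ j, a i j * |x j| := by
            refine Finset.sum_congr rfl fun j _ => ?_
            rw [abs_mul, abs_of_nonneg (ha0 i j)]
    have h2 : ∑ j, a i j * y j = (∑ j, a i j * |x j|) / |x s| := by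
      rw [Finset.sum_div]
      refine Finset.sum_congr rfl fun j _ => ?_
      rw [hy]; ring
    rw [h2, hy]
    show μ * (|x i| / |x s|) ≤ _
    rw [← mul_div_assoc]
    exact div_le_div_of_nonneg_right h1 hspos.le
  clear_value a
  obtain ⟨ε, hε⟩ : ∃ ε : ℝ, ε = (Δ : ℝ) - μ := ⟨_, rfl⟩
  rw [← hε]
  have hloc : ∀ i, ∑ j, a i j * (y i - y j) ≤ (ε - (Δ - G.degree i)) * y i := by
    intro i
    have : ∑ j, a i j * (y i - y j) = G.degree i * y i - ∑ j, a i j * y j := by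
      rw [← hdeg i, Finset.sum_mul, ← Finset.sum_sub_distrib]
      exact Finset.sum_congr rfl fun j _ => by ring
    rw [this, hε]
    have := hysub i
    linarith
  have hk : ∀ i, (0 : ℝ) ≤ Δ - G.degree i := by
    intro i
    have : (G.degree i : ℝ) ≤ Δ := by exact_mod_cast hΔ i
    linarith
  have hkt : (1 : ℝ) ≤ Δ - G.degree t := by
    have : (G.degree t : ℝ) + 1 ≤ Δ := by exact_mod_cast ht
    linarith
  have hloc' : ∀ i, ∑ j, a i j * (y i - y j) ≤ ε * y i := by
    intro i
    have := hloc i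
    have := mul_nonneg (hk i) (hy0 i)
    linarith
  -- total
  have hyt : y t ≤ ε * ∑ i, y i := by
    have h1 := cut_aux a hsymm y Finset.univ
    simp only [Finset.compl_univ, Finset.sum_empty, Finset.sum_const_zero] at h1
    have h2 : ∑ i, ∑ j, a i j * (y i - y j) ≤ ∑ i, (ε - (Δ - G.degree i)) * y i :=
      Finset.sum_le_sum fun i _ => hloc i
    have h3 : ∑ i, (ε - (Δ - G.degree i)) * y i
        = ε * ∑ i, y i - ∑ i, ((Δ:ℝ) - G.degree i) * y i := by
      rw [Finset.mul_sum, ← Finset.sum_sub_distrib]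
      exact Finset.sum_congr rfl fun j _ => by ring
    have h4 : ((Δ:ℝ) - G.degree t) * y t ≤ ∑ i, ((Δ:ℝ) - G.degree i) * y i :=
      Finset.single_le_sum (f := fun i => ((Δ:ℝ) - G.degree i) * y i)
        (fun i _ => mul_nonneg (hk i) (hy0 i)) (Finset.mem_univ t)
    have h5 := mul_le_mul_of_nonneg_right hkt (hy0 t)
    linarith
  have hsum1 : 1 ≤ ∑ i, y i := by
    rw [← hys]
    exact Finset.single_le_sum (fun i _ => hy0 i) (Finset.mem_univ s)
  have hε0 : 0 ≤ ε := by
    by_contra h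
    push Not at h
    have := hy0 t
    nlinarith
  obtain ⟨n, hn⟩ : ∃ n : ℝ, n = Fintype.card V := ⟨_, rfl⟩
  have hn2 : 2 ≤ n := by
    rw [hn]; exact_mod_cast Fintype.one_lt_card
  have hsumn : ∑ i, y i ≤ n := by
    rw [hn]
    calc ∑ i, y i ≤ ∑ i : V, (1 : ℝ) := Finset.sum_le_sum fun i _ => hy1 i
      _ = _ := by simp
  -- first edge
  have hfirst : ∀ v, G.Adj s v → y s - y v ≤ ε := by
    intro v hv
    have h1 := hloc' s
    have h2 : a s v * (y s - y v) ≤ ∑ j, a s j * (y s - y j) :=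
      Finset.single_le_sum (f := fun j => a s j * (y s - y j))
        (fun j _ => mul_nonneg (ha0 s j) (by rw [hys]; linarith [hy1 j])) (Finset.mem_univ v)
    rw [ha1 s v hv] at h2
    rw [hys] at *
    linarith
  -- general edge
  have hedge : ∀ u v, G.Adj u v → y u - y v ≤ ε * (n - 1) := by
    intro u v huv
    by_cases hle : y u ≤ y v
    · have : 0 ≤ ε * (n - 1) := mul_nonneg hε0 (by linarith)
      linarith
    push Not at hle
    obtain ⟨S, hS⟩ : ∃ S : Finset V, S = Finset.univ.filter (fun w => y u ≤ y w) := ⟨_, rfl⟩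
    have hmem : ∀ w, w ∈ S ↔ y u ≤ y w := by intro w; simp [hS]
    have huS : u ∈ S := (hmem u).mpr le_rfl
    have hvS : v ∈ Sᶜ := by
      rw [Finset.mem_compl, hmem]; exact not_le.mpr hle
    have hnn : ∀ i ∈ S, ∀ j ∈ Sᶜ, 0 ≤ a i j * (y i - y j) := by
      intro i hi j hj
      rw [Finset.mem_compl, hmem] at hj
      rw [hmem] at hi
      exact mul_nonneg (ha0 i j) (by linarith)
    have h1 : a u v * (y u - y v) ≤ ∑ j ∈ Sᶜ, a u j * (y u - y j) :=
      Finset.single_le_sum (f := fun j => a u j * (y u - y j)) (hnn u huS) hvS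
    have h2 : ∑ j ∈ Sᶜ, a u j * (y u - y j) ≤ ∑ i ∈ S, ∑ j ∈ Sᶜ, a i j * (y i - y j) :=
      Finset.single_le_sum (f := fun i => ∑ j ∈ Sᶜ, a i j * (y i - y j))
        (fun i hi => Finset.sum_nonneg (hnn i hi)) huS
    rw [← cut_aux a hsymm y S] at h2
    have h3 : ∑ i ∈ S, ∑ j, a i j * (y i - y j) ≤ ∑ i ∈ S, ε := by
      refine Finset.sum_le_sum fun i _ => (hloc' i).trans ?_
      nlinarith [hy1 i]
    rw [Finset.sum_const, nsmul_eq_mul] at h3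
    have hcard : (S.card : ℝ) ≤ n - 1 := by
      have : S.card < Fintype.card V := Finset.card_lt_univ_of_notMem (Finset.mem_compl.mp hvS)
      have : (S.card : ℝ) + 1 ≤ Fintype.card V := by exact_mod_cast this
      rw [hn]; linarith
    rw [ha1 u v huv] at h1
    nlinarith
  -- strictness
  have hDr : (2 : ℝ) ≤ G.diam := by exact_mod_cast hD2
  rw [← hn]
  have hnD : 0 < n * G.diam := by positivity
  rw [gt_iff_lt, div_lt_iff₀ hnD]
  by_cases heq : ∀ i, y i = 1
  · have h1 := hloc t
    simp only [heq, sub_self, mul_zero, Finset.sum_const_zero, mul_one] at h1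
    nlinarith
  have hsumlt : ∑ i, y i < n := by
    push Not at heq
    obtain ⟨i, hi⟩ := heq
    rw [hn]
    calc ∑ i, y i < ∑ i : V, (1 : ℝ) :=
          Finset.sum_lt_sum (fun i _ => hy1 i) ⟨i, Finset.mem_univ i, lt_of_le_of_ne (hy1 i) hi⟩
      _ = _ := by simp
  have hεpos : 0 < ε := by
    refine lt_of_le_of_ne hε0 fun h0 => ?_
    obtain ⟨p⟩ := hconn.preconnected s t
    have := walk_aux y _ hedge p
    rw [← h0] at this hyt
    linarith
  have hyt' : y t < ε * n := lt_of_le_of_lt hyt (mul_lt_mul_of_pos_left hsumlt hεpos)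
  obtain ⟨p, hp⟩ := hconn.exists_walk_length_eq_dist s t
  have hpD : p.length ≤ G.diam := hp ▸ SimpleGraph.dist_le_diam hfin
  clear hp
  cases p with
  | nil => rw [hys] at hyt'; nlinarith [mul_pos hεpos (by linarith : 0 < n)]
  | cons hadj q =>
    have h1 := hfirst _ hadj
    have h2 := walk_aux y _ hedge q
    rw [SimpleGraph.Walk.length_cons] at hpD
    have h3 : (q.length : ℝ) + 1 ≤ G.diam := by exact_mod_cast hpD
    have h4 : (q.length : ℝ) * (ε * (n - 1)) ≤ (G.diam - 1) * (ε * (n - 1)) :=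
      mul_le_mul_of_nonneg_right (by linarith) (mul_nonneg hε0 (by linarith))
    have h5 : 0 ≤ ε * (G.diam - 2) := mul_nonneg hε0 (by linarith)
    rw [hys] at h1
    nlinarith
end

section
/- Let G be a graph obtained from a connected Δ-regular graph on n vertices, with Δ ≥ cn for a constant c > 0, by deleting one edge so that G remains connected. Then Δ − λ₁(G) ≥ 1/(nD) > c'/n for a constant c' > 0 depending only on c; combined with Δ − λ₁(G) < 2/n, this gives Δ − λ₁(G) = Θ(1/n). -/
open SimpleGraph Finset Matrix

/-- squared difference along an edge -/
def sqd {V : Type} (x : V → ℝ) : Sym2 V → ℝ :=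
  Sym2.lift ⟨fun a b => (x a - x b) ^ 2, fun a b => by ring⟩

theorem sqd_mk {V : Type} (x : V → ℝ) (a b : V) : sqd x s(a, b) = (x a - x b) ^ 2 := rfl

theorem sqd_nonneg {V : Type} (x : V → ℝ) (e : Sym2 V) : 0 ≤ sqd x e := by
  induction e using Sym2.ind with
  | _ a b => rw [sqd_mk]; positivity

theorem sum_adj_eq {V : Type} [Fintype V] [DecidableEq V] (G : SimpleGraph V)
    [DecidableRel G.Adj] (g : Sym2 V → ℝ) :
    (∑ i, ∑ j, if G.Adj i j then g s(i, j) else 0) = 2 * ∑ e ∈ G.edgeFinset, g e := by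
  rw [← Fintype.sum_prod_type' (f := fun i j => if G.Adj i j then g s(i, j) else 0),
    ← Finset.sum_filter, Finset.mul_sum]
  rw [← Finset.sum_fiberwise_of_maps_to (s := univ.filter fun p : V × V => G.Adj p.1 p.2)
    (t := G.edgeFinset) (g := fun p => s(p.1, p.2)) (by simp)]
  apply Finset.sum_congr rfl
  intro e he
  induction e using Sym2.ind with
  | _ a b =>
    have hab : G.Adj a b := by simpa using he
    have : ((univ.filter fun p : V × V => G.Adj p.1 p.2).filter fun p => s(p.1, p.2) = s(a, b))
        = {(a, b), (b, a)} := by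
      ext ⟨c, d⟩
      simp only [mem_filter, mem_univ, true_and, Sym2.eq_iff, mem_insert, mem_singleton,
        Prod.mk.injEq]
      constructor
      · exact fun h => h.2
      · rintro (⟨rfl, rfl⟩ | ⟨rfl, rfl⟩)
        · exact ⟨hab, by simp⟩
        · exact ⟨hab.symm, by simp⟩
    rw [this, Finset.sum_pair (by simp [hab.ne])]
    simp only
    rw [Sym2.eq_swap (a := b)]; ring

theorem walk_sq_le {V : Type} (G : SimpleGraph V) (x : V → ℝ) {a b : V} (p : G.Walk a b) :
    (x a - x b) ^ 2 ≤ p.length * (p.edges.map (sqd x)).sum := by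
  induction p with
  | nil => simp
  | @cons a b c h p ih =>
    simp only [Walk.length_cons, Walk.edges_cons, List.map_cons, List.sum_cons, sqd_mk]
    push_cast
    set s := (p.edges.map (sqd x)).sum
    have hs : 0 ≤ s := List.sum_nonneg (by
      intro y hy
      obtain ⟨e, _, rfl⟩ := List.mem_map.1 hy
      exact sqd_nonneg x e)
    rcases Nat.eq_zero_or_pos p.length with h0 | h0
    · have : x b = x c := by
        rw [h0] at ih
        have : (x b - x c) ^ 2 = 0 := le_antisymm (by simpa using ih) (sq_nonneg _)
        linarith [pow_eq_zero_iff (two_ne_zero) |>.1 this]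
      rw [h0, this]; simp; linarith
    · have hk : (0 : ℝ) < p.length := by exact_mod_cast h0
      set k : ℝ := (p.length : ℝ)
      have h1 : k * (x a - x c) ^ 2 ≤ k * ((k + 1) * ((x a - x b) ^ 2 + s)) := by
        nlinarith [sq_nonneg (k * (x a - x b) - (x b - x c))]
      exact le_of_mul_le_mul_left h1 hk

theorem walk_sq_le_finset {V : Type} [DecidableEq V] (G : SimpleGraph V) (x : V → ℝ) {a b : V}
    (p : G.Walk a b) (hp : p.IsPath) (S : Finset (Sym2 V)) (hS : ∀ e ∈ p.edges, e ∈ S) :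
    (x a - x b) ^ 2 ≤ p.length * ∑ e ∈ S, sqd x e := by
  refine (walk_sq_le G x p).trans ?_
  have hn : p.edges.Nodup := hp.isTrail.edges_nodup
  rw [← List.sum_toFinset _ hn]
  refine mul_le_mul_of_nonneg_left ?_ (Nat.cast_nonneg _)
  apply Finset.sum_le_sum_of_subset_of_nonneg
  · intro e he; exact hS e (by simpa using he)
  · intros; exact sqd_nonneg _ _

theorem aux_quad (p q T k : ℝ) (hk : 0 ≤ k) (hT : 0 ≤ T) (h : (p - q) ^ 2 ≤ k * T) :
    p ^ 2 ≤ (k + 1) * (T + q ^ 2) := by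
  rcases hk.eq_or_lt with rfl | hk
  · have : (p - q) ^ 2 = 0 := le_antisymm (by simpa using h) (sq_nonneg _)
    have : p = q := by linarith [pow_eq_zero_iff (two_ne_zero) |>.1 this]
    subst this; linarith
  · have h1 : k * p ^ 2 ≤ k * ((k + 1) * (T + q ^ 2)) := by
      nlinarith [sq_nonneg (k * q - (p - q))]
    exact le_of_mul_le_mul_left h1 hk

/-- Key energy bound. -/
theorem energy_bound {V : Type} [Fintype V] [DecidableEq V] (G : SimpleGraph V)
    [DecidableRel G.Adj] (hG : G.Connected) (x : V → ℝ) (u v w : V) (huv : u ≠ v)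
    (hnadj : ¬ G.Adj u v) (D : ℕ) (hD : ∀ a b, G.dist a b ≤ D) (hD1 : 1 ≤ D) :
    x w ^ 2 ≤ D * (∑ e ∈ G.edgeFinset, sqd x e + x u ^ 2 + x v ^ 2) := by
  have hE : 0 ≤ ∑ e ∈ G.edgeFinset, sqd x e := Finset.sum_nonneg fun e _ => sqd_nonneg x e
  have close : ∀ a, G.dist w a < D →
      x w ^ 2 ≤ D * (∑ e ∈ G.edgeFinset, sqd x e + x a ^ 2) := by
    intro a ha
    obtain ⟨p, hp, hl⟩ := hG.exists_path_of_dist w a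
    have h1 := walk_sq_le_finset G x p hp G.edgeFinset
      (fun e he => by simpa using p.edges_subset_edgeSet he)
    refine (aux_quad _ _ _ _ (Nat.cast_nonneg _) hE h1).trans ?_
    gcongr
    rw [hl]; exact_mod_cast ha
  rcases lt_or_ge (G.dist w u) D with h | hu
  · refine (close u h).trans ?_
    refine mul_le_mul_of_nonneg_left ?_ (Nat.cast_nonneg _)
    nlinarith [sq_nonneg (x v)]
  rcases lt_or_ge (G.dist w v) D with h | hv
  · refine (close v h).trans ?_
    refine mul_le_mul_of_nonneg_left ?_ (Nat.cast_nonneg _)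
    nlinarith [sq_nonneg (x u)]
  have hu : G.dist w u = D := le_antisymm (hD _ _) hu
  have hv : G.dist w v = D := le_antisymm (hD _ _) hv
  -- penultimate vertices
  have pen : ∀ a, G.dist w a = D → ∃ a', ∃ p : G.Walk a' w, G.Adj a a' ∧ p.IsPath ∧
      p.length + 1 = D ∧ ∀ e ∈ p.edges, ∀ b ∈ e, G.dist w b < D := by
    intro a ha
    obtain ⟨p, hp, hl⟩ := hG.exists_path_of_dist a w
    rw [SimpleGraph.dist_comm, ha] at hl
    cases p with
    | nil => simp at hl; omega
    | @cons _ a' _ h p =>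
      refine ⟨a', p, h, hp.of_cons, by simpa using hl, ?_⟩
      intro e he b hb
      have hbs : b ∈ p.support := p.mem_support_of_mem_edges he hb
      have h1 := SimpleGraph.dist_le (p.dropUntil b hbs)
      have h2 := p.length_dropUntil_le_length hbs
      rw [SimpleGraph.dist_comm]
      simp at hl; omega
  obtain ⟨u', p, hadu, hp, hpl, hpe⟩ := pen u hu
  obtain ⟨v', q, hadv, hq, hql, hqe⟩ := pen v hv
  set S := (G.edgeFinset.erase s(u, u')).erase s(v, v') with hS
  have hne : s(v, v') ≠ s(u, u') := by
    intro h
    rw [Sym2.eq_iff] at h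
    rcases h with ⟨h, _⟩ | ⟨h, _⟩
    · exact huv h.symm
    · subst h; exact hnadj hadu
  have hsum : ∑ e ∈ G.edgeFinset, sqd x e
      = ∑ e ∈ S, sqd x e + (x u - x u') ^ 2 + (x v - x v') ^ 2 := by
    rw [← Finset.sum_erase_add _ _ (show s(u, u') ∈ G.edgeFinset by simpa using hadu),
      ← Finset.sum_erase_add _ _ (show s(v, v') ∈ G.edgeFinset.erase s(u, u') from
        Finset.mem_erase.2 ⟨hne, by simpa using hadv⟩), sqd_mk, sqd_mk]
    ring
  have hT : 0 ≤ ∑ e ∈ S, sqd x e := Finset.sum_nonneg fun e _ => sqd_nonneg x e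
  have sub : ∀ {a' : V} (p : G.Walk a' w), (∀ e ∈ p.edges, ∀ b ∈ e, G.dist w b < D) →
      ∀ e ∈ p.edges, e ∈ S := by
    intro a' p hpe e he
    refine Finset.mem_erase.2 ⟨?_, Finset.mem_erase.2 ⟨?_, by simpa using p.edges_subset_edgeSet he⟩⟩
    · rintro rfl
      have := hpe _ he v (by simp); omega
    · rintro rfl
      have := hpe _ he u (by simp); omega
  have h1 := walk_sq_le_finset G x p hp S (sub p hpe)
  have h2 := walk_sq_le_finset G x q hq S (sub q hqe)
  have h1' := aux_quad (x w) (x u') _ _ (Nat.cast_nonneg _) hT (by rw [← neg_sub, neg_sq]; exact h1)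
  have h2' := aux_quad (x w) (x v') _ _ (Nat.cast_nonneg _) hT (by rw [← neg_sub, neg_sq]; exact h2)
  have e1 : (p.length : ℝ) + 1 = D := by exact_mod_cast hpl
  have e2 : (q.length : ℝ) + 1 = D := by exact_mod_cast hql
  rw [e1] at h1'
  rw [e2] at h2'
  rw [hsum]
  set T := ∑ e ∈ S, sqd x e
  have hD0 : (0 : ℝ) ≤ D := Nat.cast_nonneg _
  have : (T + x u' ^ 2) / 2 + (T + x v' ^ 2) / 2
      ≤ T + (x u - x u') ^ 2 + (x v - x v') ^ 2 + x u ^ 2 + x v ^ 2 := by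
    nlinarith [sq_nonneg (x u - x u' + x u), sq_nonneg (x v - x v' + x v)]
  have := mul_le_mul_of_nonneg_left this hD0
  linarith

/-- Diameter bound. -/
theorem diam_bound {V : Type} [Fintype V] [DecidableEq V] (G : SimpleGraph V)
    [DecidableRel G.Adj] (hG : G.Connected) (Δ : ℕ) (hdeg : ∀ a, Δ ≤ G.degree a + 1) (hΔ : 0 < Δ) :
    G.diam * Δ < 3 * Fintype.card V := by
  have := hG.nonempty
  obtain ⟨s, t, hst⟩ := G.exists_dist_eq_diam
  obtain ⟨p, hl⟩ := hG.exists_walk_length_eq_dist s t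
  have hlev : ∀ k, k ≤ G.diam → ∃ a, G.dist s a = k := by
    intro k hk
    refine ⟨p.getVert k, ?_⟩
    have h1 := SimpleGraph.dist_le (p.take k)
    have h2 := SimpleGraph.dist_le (p.drop k)
    have h3 := hG.dist_triangle (u := s) (v := p.getVert k) (w := t)
    simp only [Walk.take_length, Walk.drop_length] at h1 h2
    omega
  have hfib : ∀ i ∈ Finset.range (G.diam / 3 + 1),
      Δ ≤ #{a ∈ (univ : Finset V) | (G.dist s a + 1) / 3 = i} := by
    intro i hi
    obtain ⟨a, ha⟩ := hlev (3 * i) (by have := Finset.mem_range.1 hi; omega)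
    calc Δ ≤ #(insert a (G.neighborFinset a)) := by
          rw [Finset.card_insert_of_notMem (by simp), G.card_neighborFinset_eq_degree]; exact hdeg a
      _ ≤ _ := by
          apply Finset.card_le_card
          intro b hb
          simp only [mem_filter, mem_univ, true_and]
          rcases Finset.mem_insert.1 hb with rfl | hb
          · omega
          · have hab : G.Adj a b := by simpa using hb
            have d1 : G.dist a b = 1 := SimpleGraph.dist_eq_one_iff_adj.2 hab
            have d2 : G.dist b a = 1 := SimpleGraph.dist_eq_one_iff_adj.2 hab.symm
            have h3 := hG.dist_triangle (u := s) (v := a) (w := b)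
            have h4 := hG.dist_triangle (u := s) (v := b) (w := a)
            omega
  have hsum : (G.diam / 3 + 1) * Δ ≤ Fintype.card V := by
    calc (G.diam / 3 + 1) * Δ = ∑ i ∈ Finset.range (G.diam / 3 + 1), Δ := by simp
      _ ≤ ∑ i ∈ Finset.range (G.diam / 3 + 1),
            #{a ∈ (univ : Finset V) | (G.dist s a + 1) / 3 = i} := Finset.sum_le_sum hfib
      _ ≤ _ := by
        rw [← Finset.card_univ]
        rw [← Finset.card_biUnion]
        · exact Finset.card_le_card (Finset.subset_univ _)
        · intro i _ j _ hij
          rw [Function.onFun, Finset.disjoint_left]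
          intro a ha hb
          simp only [mem_filter, mem_univ, true_and] at ha hb
          exact hij (ha.symm.trans hb)
  have : G.diam < 3 * (G.diam / 3 + 1) := by omega
  nlinarith

/-- Rayleigh. -/
theorem psd_of_top {V : Type} [Fintype V] [DecidableEq V] (A : Matrix V V ℝ) (hA : A.IsHermitian)
    (μ : ℝ) (h : ∀ ν : ℝ, Module.End.HasEigenvalue (Matrix.toLin' A) ν → ν ≤ μ) :
    (μ • (1 : Matrix V V ℝ) - A).PosSemidef := by
  have hB : (μ • (1 : Matrix V V ℝ) - A).IsHermitian := by
    apply Matrix.IsHermitian.sub _ hA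
    simp [Matrix.IsHermitian]
  rw [hB.posSemidef_iff_eigenvalues_nonneg]
  intro i
  have h1 := hB.mulVec_eigenvectorBasis i
  have hne : (hB.eigenvectorBasis i).ofLp ≠ 0 := by
    intro h0
    apply hB.eigenvectorBasis.orthonormal.ne_zero i
    ext j; exact congrFun h0 j
  have := h (μ - hB.eigenvalues i) (by
    apply Module.End.hasEigenvalue_of_hasEigenvector (x := (hB.eigenvectorBasis i).ofLp)
    refine ⟨Module.End.mem_eigenspace_iff.2 ?_, hne⟩
    rw [Matrix.sub_mulVec, Matrix.smul_mulVec, Matrix.one_mulVec] at h1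
    rw [Matrix.toLin'_apply, sub_smul, ← h1]; simp)
  simp; linarith

theorem main_aux {V : Type} [Fintype V] [DecidableEq V] (G' : SimpleGraph V)
    [DecidableRel G'.Adj] (Δ : ℕ) (hreg : G'.IsRegularOfDegree Δ) (u v : V) (huv : G'.Adj u v)
    (G : SimpleGraph V) (hGG : G = G'.deleteEdges {s(u, v)}) [DecidableRel G.Adj] (a : V) :
    (G.degree a : ℝ) = Δ - (if a = u then 1 else 0) - (if a = v then 1 else 0) := by
  have hne := huv.ne
  have hadj : ∀ i j, G.Adj i j ↔ G'.Adj i j ∧ s(i, j) ≠ s(u, v) := by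
    intro i j; subst hGG; simp [SimpleGraph.deleteEdges_adj]
  have hd := hreg a
  by_cases h1 : a = u
  · have : G.neighborFinset a = (G'.neighborFinset a).erase v := by
      ext j
      simp only [mem_neighborFinset, hadj, Finset.mem_erase, Ne, Sym2.eq_iff]
      grind
    have hc := congrArg Finset.card this
    rw [Finset.card_erase_of_mem (by subst h1; simpa using huv), card_neighborFinset_eq_degree,
      card_neighborFinset_eq_degree, hd] at hc
    have hpos : 0 < Δ := by rw [← hd, G'.degree_pos_iff_exists_adj]; subst h1; exact ⟨v, huv⟩
    rw [hc, Nat.cast_sub hpos, if_pos h1, if_neg (by rw [h1]; exact hne)]; simp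
  · by_cases h2 : a = v
    · have : G.neighborFinset a = (G'.neighborFinset a).erase u := by
        ext j
        simp only [mem_neighborFinset, hadj, Finset.mem_erase, Ne, Sym2.eq_iff]
        grind
      have hc := congrArg Finset.card this
      rw [Finset.card_erase_of_mem (by subst h2; simpa using huv.symm),
        card_neighborFinset_eq_degree, card_neighborFinset_eq_degree, hd] at hc
      have hpos : 0 < Δ := by rw [← hd, G'.degree_pos_iff_exists_adj]; subst h2; exact ⟨u, huv.symm⟩
      rw [hc, Nat.cast_sub hpos, if_pos h2, if_neg h1]; simp
    · have : G.neighborFinset a = G'.neighborFinset a := by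
        ext j
        simp only [mem_neighborFinset, hadj, Ne, Sym2.eq_iff]
        grind
      have hc := congrArg Finset.card this
      rw [card_neighborFinset_eq_degree, card_neighborFinset_eq_degree, hd] at hc
      rw [hc, if_neg h1, if_neg h2]; simp

/-- Let `G` be obtained from a connected `Δ`-regular graph on `n` vertices with `Δ ≥ cn`
(`c > 0` a constant) by deleting one edge, so that `G` stays connected. Then
`Δ − λ₁(G) ≥ 1/(nD) > c'/n` for a constant `c' > 0` depending only on `c`, and combined
with `Δ − λ₁(G) < 2/n` this gives `Δ − λ₁(G) = Θ(1/n)`. -/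
theorem stmt18 (c : ℝ) (hc : 0 < c) :
    ∃ c' : ℝ, 0 < c' ∧
      ∀ (V : Type) (_ : Fintype V) (_ : DecidableEq V)
        (G' : SimpleGraph V) (_ : DecidableRel G'.Adj)
        (_ : G'.Connected)
        (Δ : ℕ) (_ : G'.IsRegularOfDegree Δ)
        (_ : (Δ : ℝ) ≥ c * Fintype.card V)
        (e : Sym2 V) (_ : e ∈ G'.edgeSet)
        (G : SimpleGraph V) (_ : G = G'.deleteEdges {e}) (_ : DecidableRel G.Adj)
        (_ : G.Connected)
        (μ : ℝ)
        (_ : Module.End.HasEigenvalue (Matrix.toLin' (G.adjMatrix ℝ)) μ)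
        (_ : ∀ ν : ℝ, Module.End.HasEigenvalue (Matrix.toLin' (G.adjMatrix ℝ)) ν → ν ≤ μ),
        (Δ : ℝ) - μ ≥ 1 / (Fintype.card V * G.diam) ∧
        1 / ((Fintype.card V : ℝ) * G.diam) > c' / Fintype.card V ∧
        (Δ : ℝ) - μ < 2 / Fintype.card V := by
  refine ⟨c / 3, by positivity, ?_⟩
  intro V _ _ G' _ hG' Δ hreg hΔc e he G hGG _ hG μ hμ hmax
  induction e using Sym2.ind with
  | _ u v =>
  have huv : G'.Adj u v := by simpa using he
  have hne := huv.ne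
  have hnadj : ¬ G.Adj u v := by subst hGG; simp [SimpleGraph.deleteEdges_adj]
  have hdeg := main_aux G' Δ hreg u v huv G hGG
  have : Nontrivial V := ⟨u, v, hne⟩
  have htop : G.ediam ≠ ⊤ := SimpleGraph.connected_iff_ediam_ne_top.1 hG
  have hD1 : 1 ≤ G.diam := Nat.one_le_iff_ne_zero.2 (SimpleGraph.diam_ne_zero_of_ediam_ne_top htop)
  have hDr : (0 : ℝ) < G.diam := by exact_mod_cast hD1
  have hn : (0 : ℝ) < Fintype.card V := by exact_mod_cast Fintype.card_pos
  have hdeg_le : ∀ a, Δ ≤ G.degree a + 1 := by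
    intro a
    have h1 := hdeg a
    have : (Δ : ℝ) ≤ G.degree a + 1 := by
      rw [h1]; split_ifs with h1 h2 <;> first | linarith | (exact absurd (h1.symm.trans h2) hne)
    exact_mod_cast this
  have hΔ0 : 0 < Δ := by rw [← hreg u, G'.degree_pos_iff_exists_adj]; exact ⟨v, huv⟩
  refine ⟨?_, ?_, ?_⟩
  · obtain ⟨x, hx⟩ := hμ.exists_hasEigenvector
    have hx1 : G.adjMatrix ℝ *ᵥ x = μ • x := by
      have := hx.apply_eq_smul; rwa [Matrix.toLin'_apply] at this
    have hx0 := hx.2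
    obtain ⟨w, -, hw⟩ := Finset.exists_max_image univ (fun i => x i ^ 2) ⟨u, mem_univ u⟩
    have hb := energy_bound G hG x u v w hne hnadj G.diam
      (fun a b => SimpleGraph.dist_le_diam htop) hD1
    have hlap := G.lapMatrix_toLinearMap₂' ℝ x
    have hs := sum_adj_eq G (sqd x)
    simp only [sqd_mk] at hs
    rw [hs, toLinearMap₂'_apply', lapMatrix, sub_mulVec, dotProduct_sub,
      dotProduct_mulVec_degMatrix, hx1] at hlap
    have hdx : x ⬝ᵥ (μ • x) = μ * ∑ i, x i ^ 2 := by
      simp only [dotProduct, Pi.smul_apply, smul_eq_mul, Finset.mul_sum]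
      exact Finset.sum_congr rfl fun i _ => by ring
    have hdd : ∑ i, (G.degree i : ℝ) * x i * x i = Δ * ∑ i, x i ^ 2 - x u ^ 2 - x v ^ 2 := by
      have : ∀ i, (G.degree i : ℝ) * x i * x i = Δ * x i ^ 2 - (if i = u then x i ^ 2 else 0)
          - (if i = v then x i ^ 2 else 0) := by
        intro i; rw [hdeg]; split_ifs <;> ring
      simp only [this, Finset.sum_sub_distrib, ← Finset.mul_sum]
      simp
    rw [hdx, hdd] at hlap
    have hQ : ∑ e ∈ G.edgeFinset, sqd x e + x u ^ 2 + x v ^ 2 = (Δ - μ) * ∑ i, x i ^ 2 := by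
      linarith
    rw [hQ] at hb
    have hsn : ∑ i, x i ^ 2 ≤ Fintype.card V * x w ^ 2 := by
      calc ∑ i, x i ^ 2 ≤ ∑ i : V, x w ^ 2 := Finset.sum_le_sum fun i hi => hw i hi
        _ = _ := by simp
    have hpos : 0 < ∑ i, x i ^ 2 := by
      obtain ⟨i, hi⟩ := Function.ne_iff.1 hx0
      exact Finset.sum_pos' (fun i _ => sq_nonneg _) ⟨i, mem_univ i, by
        have : x i ≠ 0 := hi
        positivity⟩
    rw [ge_iff_le, div_le_iff₀ (by positivity)]
    have h3 : (∑ i, x i ^ 2) * 1 ≤ (∑ i, x i ^ 2) * ((Δ - μ) * (Fintype.card V * G.diam)) := by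
      have := mul_le_mul_of_nonneg_left hb hn.le
      linarith
    exact le_of_mul_le_mul_left h3 hpos
  · have h := diam_bound G hG Δ hdeg_le hΔ0
    have h' : (G.diam : ℝ) * Δ < 3 * Fintype.card V := by exact_mod_cast h
    rw [gt_iff_lt, div_lt_div_iff₀ hn (by positivity)]
    have := mul_le_mul_of_nonneg_left hΔc hDr.le
    nlinarith
  · have hpsd := psd_of_top (G.adjMatrix ℝ) (G.isHermitian_adjMatrix ℝ) μ hmax
    have hmv : (μ • (1 : Matrix V V ℝ) - G.adjMatrix ℝ) *ᵥ (fun _ => 1)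
        = fun i => μ - G.degree i := by
      ext i
      rw [Matrix.sub_mulVec, Matrix.smul_mulVec, Matrix.one_mulVec]
      simp [adjMatrix_mulVec_apply]
    have hval : star (fun _ : V => (1 : ℝ)) ⬝ᵥ
        ((μ • (1 : Matrix V V ℝ) - G.adjMatrix ℝ) *ᵥ (fun _ => 1))
        = Fintype.card V * (μ - Δ) + 2 := by
      rw [hmv]
      simp only [dotProduct, hdeg, Pi.star_apply, star_trivial, one_mul, Finset.sum_sub_distrib]
      simp
      ring
    have h0 := hpsd.dotProduct_mulVec_nonneg (fun _ => 1)
    have hz := hpsd.dotProduct_mulVec_zero_iff (fun _ => 1)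
    rw [hval] at h0 hz
    have hnz : (Fintype.card V : ℝ) * (μ - Δ) + 2 ≠ 0 := by
      intro h
      have h1 := hz.1 h
      rw [hmv] at h1
      obtain ⟨t, ht⟩ := (G.degree_pos_iff_exists_adj u).1 (hG.preconnected.degree_pos_of_nontrivial u)
      have hu := congrFun h1 u
      have ht' := congrFun h1 t
      have htv : t ≠ v := by rintro rfl; exact hnadj ht
      simp only [hdeg, if_pos, if_neg hne, if_neg ht.ne', if_neg htv, Pi.zero_apply] at hu ht'
      linarith
    have hpos := lt_of_le_of_ne h0 hnz.symm
    rw [lt_div_iff₀ hn]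
    nlinarith
end
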